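/- Let q ≥ 1, let a₁, …, a_q be real numbers linearly independent over ℚ, let A be the 2q×2q block-diagonal skew-symmetric matrix whose j-th 2×2 diagonal block is [[0, −a_j],[a_j, 0]], let C₀ = (1, 0, 1, 0, …, 1, 0) and C₁ = (0, 1, 0, 1, …, 0, 1) be 1×2q row matrices, and let d₀, d₁ > 0. Then the switched system defined by the (2q+1)×(2q+1) block matrices B₀ = [[A, −C₀ᵀ],[C₀, −d₀]] and B₁ = [[A, −C₁ᵀ],[C₁, −d₁]] is GUAS. -/

import Mathlib

open Matrix MeasureTheory

noncomputable section

/-- The switched system defined by `{B₀, B₁}` is GUAS: for every measurable switching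
law `u : [0,∞) → {0,1}` and every initial condition, the solution of `ẋ = B_{u(t)}x`
tends to `0` at `+∞`. -/
def IsGUAS {n : Type*} [Fintype n] [DecidableEq n] (B₀ B₁ : Matrix n n ℝ) : Prop :=
  ∀ u : ℝ → Fin 2, Measurable u →
    ∀ X : EuclideanSpace ℝ n, ∀ Φ : ℝ → EuclideanSpace ℝ n, Continuous Φ →
      (∀ t : ℝ, 0 ≤ t →
        Φ t = X + ∫ s in (0:ℝ)..t, Matrix.toEuclideanLin (![B₀, B₁] (u s)) (Φ s)) →
      Filter.Tendsto Φ Filter.atTop (nhds 0)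

/-- The `2q×2q` block-diagonal skew-symmetric matrix whose `j`-th `2×2` diagonal block
is `[[0, -a_j],[a_j, 0]]`, indexed by `Fin q × Fin 2`. -/
def blockDiagRot {q : ℕ} (a : Fin q → ℝ) :
    Matrix (Fin q × Fin 2) (Fin q × Fin 2) ℝ :=
  Matrix.of fun p p' =>
    if p.1 = p'.1 then !![0, -(a p.1); a p.1, 0] p.2 p'.2 else 0

/-- The row matrix `C₀ = (1, 0, 1, 0, …, 1, 0)`. -/
def rowC₀ {q : ℕ} : Matrix (Fin 1) (Fin q × Fin 2) ℝ :=
  Matrix.of fun _ p => if p.2 = 0 then 1 else 0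

/-- The row matrix `C₁ = (0, 1, 0, 1, …, 0, 1)`. -/
def rowC₁ {q : ℕ} : Matrix (Fin 1) (Fin q × Fin 2) ℝ :=
  Matrix.of fun _ p => if p.2 = 1 then 1 else 0

section Helpers

open Filter Topology

def HM (f : ℝ → ℂ) (m : ℂ) : Prop :=
  ∃ G : ℝ → ℂ, (∀ t, HasDerivAt G (f t - m) t) ∧ ∃ C : ℝ, ∀ t, ‖G t‖ ≤ C

lemma HM.add {f g : ℝ → ℂ} {m n : ℂ} (hf : HM f m) (hg : HM g n) :
    HM (fun t => f t + g t) (m + n) := by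
  obtain ⟨F, hF, C, hC⟩ := hf
  obtain ⟨G, hG, D, hD⟩ := hg
  refine ⟨fun t => F t + G t, fun t => ?_, C + D, fun t => ?_⟩
  · exact ((hF t).add (hG t)).congr_deriv (by ring)
  · exact (norm_add_le _ _).trans (add_le_add (hC t) (hD t))

lemma HM.smul {f : ℝ → ℂ} {m : ℂ} (c : ℂ) (hf : HM f m) :
    HM (fun t => c * f t) (c * m) := by
  obtain ⟨F, hF, C, hC⟩ := hf
  refine ⟨fun t => c * F t, fun t => ?_, ‖c‖ * C, fun t => ?_⟩
  · exact ((hF t).const_mul c).congr_deriv (by ring)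
  · rw [norm_mul]; exact mul_le_mul_of_nonneg_left (hC t) (norm_nonneg _)

lemma HM.sum {ι : Type*} (s : Finset ι) {f : ι → ℝ → ℂ} {m : ι → ℂ}
    (h : ∀ i, HM (f i) (m i)) : HM (fun t => ∑ i ∈ s, f i t) (∑ i ∈ s, m i) := by
  classical
  induction s using Finset.induction_on with
  | empty => exact ⟨fun _ => 0, fun t => by simpa using hasDerivAt_const t (0:ℂ), 0, by simp⟩
  | insert i s hi ih => simpa [Finset.sum_insert hi] using (h i).add ih

def EE (w : ℝ) (t : ℝ) : ℂ := Complex.exp ((w * t : ℝ) * Complex.I)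

lemma EE_norm (w t : ℝ) : ‖EE w t‖ = 1 := Complex.norm_exp_ofReal_mul_I _

lemma EE_add (v w t : ℝ) : EE (v + w) t = EE v t * EE w t := by
  unfold EE; rw [← Complex.exp_add]; congr 1; push_cast; ring

lemma EE_conj (w t : ℝ) : (starRingEnd ℂ) (EE w t) = EE (-w) t := by
  unfold EE; rw [← Complex.exp_conj]; congr 1; simp

lemma EE_deriv (w t : ℝ) : HasDerivAt (EE w) (Complex.I * w * EE w t) t := by
  unfold EE
  have h1 : HasDerivAt (fun t : ℝ => ((w * t : ℝ) : ℂ) * Complex.I) ((w:ℂ) * Complex.I) t := by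
    have := (((hasDerivAt_id t).const_mul w).ofReal_comp).mul_const Complex.I
    simpa using this
  convert h1.cexp using 1; ring

lemma HM_EE {w : ℝ} (hw : w ≠ 0) : HM (EE w) 0 := by
  have hw' : (w:ℂ) ≠ 0 := by exact_mod_cast hw
  refine ⟨fun t => (Complex.I * w)⁻¹ * EE w t, fun t => ?_, ‖(Complex.I * w)⁻¹‖, fun t => ?_⟩
  · refine ((EE_deriv w t).const_mul ((Complex.I * w)⁻¹)).congr_deriv ?_
    rw [← mul_assoc, inv_mul_cancel₀ (mul_ne_zero Complex.I_ne_zero hw')]; simp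
  · rw [norm_mul, EE_norm, mul_one]

lemma HM_EE_zero {w : ℝ} (hw : w = 0) : HM (EE w) 1 := by
  subst hw
  exact ⟨fun _ => 0, fun t => by simpa [EE] using hasDerivAt_const t (0:ℂ), 0, by simp⟩

lemma HM.contra {f : ℝ → ℂ} {m : ℂ} (hf : HM f m) (hm : 0 < m.im)
    (h : ∀ t, 0 ≤ t → (f t).im ≤ 0) : False := by
  obtain ⟨G, hG, C, hC⟩ := hf
  have hd : ∀ t, HasDerivAt (fun t => (G t).im + t * m.im) ((f t).im) t := by
    intro t
    have h1 : HasDerivAt (fun t => (G t).im) ((f t - m).im) t :=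
      Complex.imCLM.hasFDerivAt.comp_hasDerivAt t (hG t)
    exact (h1.add ((hasDerivAt_id t).mul_const m.im)).congr_deriv (by simp)
  have ha : AntitoneOn (fun t => (G t).im + t * m.im) (Set.Ici 0) := by
    apply antitoneOn_of_deriv_nonpos (convex_Ici 0)
    · exact fun t _ => (hd t).continuousAt.continuousWithinAt
    · exact fun t _ => (hd t).differentiableAt.differentiableWithinAt
    · intro t ht
      rw [(hd t).deriv]; simp at ht; exact h t ht.le
  have hC0 : 0 ≤ C := (norm_nonneg _).trans (hC 0)
  have hT : 0 ≤ (2 * C + 1) / m.im := by positivity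
  have := ha (Set.mem_Ici.2 le_rfl) (Set.mem_Ici.2 hT) hT
  simp only [zero_mul, add_zero, div_mul_cancel₀ _ hm.ne'] at this
  have h1 := (abs_le.1 ((Complex.abs_im_le_norm _).trans (hC 0))).2
  have h2 := (abs_le.1 ((Complex.abs_im_le_norm _).trans (hC ((2 * C + 1) / m.im)))).1
  linarith

lemma freq {q : ℕ} {a : Fin q → ℝ} (ha : LinearIndependent ℚ a) (j k p : Fin q) (r : ℚ)
    (h : a j + a k + r * a p = 0) : j = k ∧ k = p ∧ r = -2 := by
  have h1 := Fintype.linearIndependent_iff.1 ha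
    (fun i => (if i = j then 1 else 0) + (if i = k then 1 else 0) + (if i = p then r else 0)) (by
      simp only [add_smul, Finset.sum_add_distrib, ite_smul, one_smul, zero_smul,
        Finset.sum_ite_eq', Finset.mem_univ, if_true, Rat.smul_def]
      exact h)
  have hj := h1 j
  have hk := h1 k
  have hp := h1 p
  grind

lemma key {q : ℕ} {a : Fin q → ℝ} (ha : LinearIndependent ℚ a) (z : Fin q → ℂ) (hz : z ≠ 0) :
    ∃ t, 0 ≤ t ∧ 0 < (∑ j, EE (a j) t * z j).re * (∑ j, EE (a j) t * z j).im := by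
  by_contra! hcon
  obtain ⟨p, hp⟩ := Function.ne_iff.1 hz
  simp only [Pi.zero_apply] at hp
  set c : ℂ := Complex.I * (starRingEnd ℂ (z p))^2 with hc
  have hM : HM (fun t => ∑ j, ∑ k, (z j * z k) * (‖c‖ * EE (a j + a k) t
      + (c / 2 * EE (a j + a k + (-2 : ℚ) * a p) t + (starRingEnd ℂ c) / 2 * EE (a j + a k + (2:ℚ) * a p) t)))
      (∑ j, ∑ k, (z j * z k) * (‖c‖ * 0
      + (c / 2 * (if j = p ∧ k = p then 1 else 0) + (starRingEnd ℂ c) / 2 * 0))) := by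
    refine HM.sum _ fun j => HM.sum _ fun k => HM.smul _ (HM.add (HM.smul _ (HM_EE ?_)) (HM.add (HM.smul _ ?_) (HM.smul _ (HM_EE ?_))))
    · intro h
      have := freq ha j k p 0 (by simpa using h)
      norm_num at this
    · split_ifs with h
      · obtain ⟨rfl, rfl⟩ := h
        apply HM_EE_zero; push_cast; ring
      · apply HM_EE
        intro h'
        have := freq ha j k p _ h'
        simp at this
        exact h ⟨this.1.trans this.2, this.2⟩
    · intro h
      have := freq ha j k p _ h
      norm_num at this
  refine hM.contra ?_ ?_
  · have : (∑ j, ∑ k, (z j * z k) * (‖c‖ * 0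
      + (c / 2 * (if j = p ∧ k = p then 1 else 0) + (starRingEnd ℂ c) / 2 * 0)))
      = ((‖z p‖^4 / 2 : ℝ) : ℂ) * Complex.I := by
      simp only [ite_and, mul_zero, zero_add, add_zero, mul_ite, mul_one]
      have : ∀ j, (∑ k, if j = p then if k = p then z j * z k * (c / 2) else 0 else 0) = if j = p then z p * z p * (c/2) else 0 := by
        intro j; split_ifs with h <;> simp [h]
      simp only [this, Finset.sum_ite_eq', Finset.mem_univ, if_true]
      have h4 : ((‖z p‖^4 / 2 : ℝ) : ℂ) = (z p * starRingEnd ℂ (z p))^2 / 2 := by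
        rw [Complex.mul_conj']; push_cast; ring
      rw [h4, hc]; ring
    rw [this, Complex.im_ofReal_mul, Complex.I_im]
    have := norm_pos_iff.2 hp
    positivity
  · intro t ht
    have e : (∑ j, ∑ k, (z j * z k) * (‖c‖ * EE (a j + a k) t
      + (c / 2 * EE (a j + a k + (-2 : ℚ) * a p) t + (starRingEnd ℂ c) / 2 * EE (a j + a k + (2:ℚ) * a p) t)))
      = (∑ j, EE (a j) t * z j)^2 * ((‖c‖ + (c * EE (-2 * a p) t).re : ℝ) : ℂ) := by
      have : (((c * EE (-2 * a p) t).re : ℝ) : ℂ) = (c * EE (-2 * a p) t + starRingEnd ℂ c * EE (2 * a p) t)/2 := by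
        rw [Complex.re_eq_add_conj, map_mul, EE_conj]; congr 4; ring
      rw [sq, Finset.sum_mul_sum, Complex.ofReal_add, this, Finset.sum_mul]
      refine Finset.sum_congr rfl fun j _ => ?_
      rw [Finset.sum_mul]
      refine Finset.sum_congr rfl fun k _ => ?_
      simp only [EE_add]; push_cast; ring
    rw [e, mul_comm, Complex.im_ofReal_mul, sq, Complex.mul_im]
    have h1 : 0 ≤ ‖c‖ + (c * EE (-2 * a p) t).re := by
      have := (abs_le.1 (Complex.abs_re_le_norm (c * EE (-2 * a p) t))).1
      rw [norm_mul, EE_norm] at this; linarith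
    have h2 := hcon t ht
    nlinarith

structure SwData {q : ℕ} (a : Fin q → ℝ) (E : Type) [NormedAddCommGroup E]
    [InnerProductSpace ℝ E] [FiniteDimensional ℝ E] where
  L : Fin 2 → E →L[ℝ] E
  y : E →L[ℝ] ℝ
  C : Fin 2 → E →L[ℝ] ℝ
  d : Fin 2 → ℝ
  Z : Fin q → E →L[ℝ] ℂ
  c : Fin 2 → ℂ
  δ : ℝ
  D : ℝ
  hδ : 0 < δ
  hdδ : ∀ k, δ ≤ d k
  hdD : ∀ k, d k ≤ D
  hc : ∀ k, ‖c k‖ ≤ 1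
  hL : ∀ k x, inner ℝ x (L k x) = - d k * (y x)^2
  hy : ∀ k x, y (L k x) = C k x - d k * y x
  hZ : ∀ j k x, Z j (L k x) = Complex.I * a j * Z j x - y x * c k
  hC0 : ∀ x, C 0 x = (∑ j, Z j x).re
  hC1 : ∀ x, C 1 x = (∑ j, Z j x).im
  hinj : ∀ x, y x = 0 → (∀ j, Z j x = 0) → x = 0
  u : ℝ → Fin 2
  hu : Measurable u
  Φ : ℝ → E
  hΦ : Continuous Φ
  X : E
  heq : ∀ t : ℝ, 0 ≤ t → Φ t = X + ∫ s in (0:ℝ)..t, L (u s) (Φ s)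

namespace SwData

variable {q : ℕ} {a : Fin q → ℝ} {E : Type} [NormedAddCommGroup E]
    [InnerProductSpace ℝ E] [FiniteDimensional ℝ E] (S : SwData a E)

def KL : ℝ := ‖S.L 0‖ + ‖S.L 1‖

lemma KL_nonneg : 0 ≤ S.KL := by unfold KL; positivity

lemma L_le (k : Fin 2) (x : E) : ‖S.L k x‖ ≤ S.KL * ‖x‖ := by
  refine ((S.L k).le_opNorm x).trans (mul_le_mul_of_nonneg_right ?_ (norm_nonneg _))
  unfold KL
  have h0 := norm_nonneg (S.L 0)
  have h1 := norm_nonneg (S.L 1)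
  fin_cases k <;> simp

/-- integrability of switched expressions -/
lemma intg {F : Type*} [NormedAddCommGroup F] (g : Fin 2 → ℝ → F)
    (hg : ∀ k, Continuous (g k)) (s t : ℝ) :
    IntervalIntegrable (fun r => g (S.u r) r) volume s t := by
  have e : (fun r => g (S.u r) r) = fun r => (S.u ⁻¹' {0}).indicator (g 0) r + (S.u ⁻¹' {1}).indicator (g 1) r := by
    funext r
    simp only [Set.indicator, Set.mem_preimage, Set.mem_singleton_iff]
    have : S.u r = 0 ∨ S.u r = 1 := by omega
    rcases this with h | h <;> simp [h]
  rw [e]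
  have key : ∀ k, IntervalIntegrable ((S.u ⁻¹' {k}).indicator (g k)) volume s t := by
    intro k
    have := (hg k).intervalIntegrable (μ := volume) s t
    rw [intervalIntegrable_iff] at this ⊢
    exact this.indicator (S.hu (measurableSet_singleton k))
  exact (key 0).add (key 1)

lemma intf (s t : ℝ) : IntervalIntegrable (fun r => S.L (S.u r) (S.Φ r)) volume s t :=
  S.intg (fun k r => S.L k (S.Φ r)) (fun k => (S.L k).continuous.comp S.hΦ) s t

lemma diff {s t : ℝ} (hs : 0 ≤ s) (ht : 0 ≤ t) :
    S.Φ t - S.Φ s = ∫ r in s..t, S.L (S.u r) (S.Φ r) := by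
  rw [S.heq t ht, S.heq s hs, ← intervalIntegral.integral_interval_sub_left (S.intf 0 t) (S.intf 0 s)]
  abel

lemma diffl {F : Type*} [NormedAddCommGroup F] [NormedSpace ℝ F] [CompleteSpace F]
    (l : E →L[ℝ] F) {s t : ℝ} (hs : 0 ≤ s) (ht : 0 ≤ t) :
    l (S.Φ t) - l (S.Φ s) = ∫ r in s..t, l (S.L (S.u r) (S.Φ r)) := by
  rw [l.intervalIntegral_comp_comm (S.intf s t), ← S.diff hs ht, map_sub]

lemma diff_le {B s t : ℝ} (hs : 0 ≤ s) (hst : s ≤ t)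
    (hB : ∀ r ∈ Set.Icc s t, ‖S.Φ r‖ ≤ B) : ‖S.Φ t - S.Φ s‖ ≤ S.KL * B * (t - s) := by
  rw [S.diff hs (hs.trans hst)]
  refine (intervalIntegral.norm_integral_le_of_norm_le_const (C := S.KL * B) fun r hr => ?_).trans ?_
  · rw [Set.uIoc_of_le hst] at hr
    exact (S.L_le _ _).trans (mul_le_mul_of_nonneg_left (hB r ⟨hr.1.le, hr.2⟩) S.KL_nonneg)
  · rw [abs_of_nonneg (sub_nonneg.2 hst)]

lemma intd (s t : ℝ) : IntervalIntegrable (fun r => S.d (S.u r) * (S.y (S.Φ r))^2) volume s t :=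
  S.intg (fun k r => S.d k * (S.y (S.Φ r))^2)
    (fun k => ((S.y.continuous.comp S.hΦ).pow 2).const_mul _) s t

lemma energy0 {T : ℝ} (hT : 0 ≤ T) :
    ‖S.Φ T‖^2 + 2 * ∫ r in (0:ℝ)..T, S.d (S.u r) * (S.y (S.Φ r))^2 = ‖S.Φ 0‖^2 := by
  obtain ⟨B, hB⟩ := (isCompact_Icc (a := (0:ℝ)) (b := T)).exists_bound_of_continuousOn S.hΦ.continuousOn
  have hB0 : 0 ≤ B := (norm_nonneg _).trans (hB 0 ⟨le_rfl, hT⟩)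
  set g : ℝ → ℝ := fun t => ‖S.Φ t‖^2 + 2 * ∫ r in (0:ℝ)..t, S.d (S.u r) * (S.y (S.Φ r))^2 with hg
  have hKB : 0 ≤ S.KL * B := mul_nonneg S.KL_nonneg hB0
  have bound : ∀ s t, 0 ≤ s → s ≤ t → t ≤ T → |g t - g s| ≤ 3 * (S.KL * B)^2 * (t - s)^2 := by
    intro s t hs hst htT
    have hBr : ∀ r ∈ Set.Icc s t, ‖S.Φ r‖ ≤ B := fun r hr => hB r ⟨hs.trans hr.1, hr.2.trans htT⟩
    have h1 := S.diff_le hs hst hBr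
    have e1 : g t - g s = ‖S.Φ t - S.Φ s‖^2 + 2 * ∫ r in s..t, inner ℝ (S.Φ s - S.Φ r) (S.L (S.u r) (S.Φ r)) := by
      have i1 : IntervalIntegrable (fun r => inner ℝ (S.Φ s) (S.L (S.u r) (S.Φ r))) volume s t :=
        S.intg (fun k r => inner ℝ (S.Φ s) (S.L k (S.Φ r)))
          (fun k => continuous_const.inner ((S.L k).continuous.comp S.hΦ)) s t
      have i2 : (∫ r in s..t, inner ℝ (S.Φ s) (S.L (S.u r) (S.Φ r))) = inner ℝ (S.Φ s) (S.Φ t - S.Φ s) := by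
        have := S.diffl (innerSL ℝ (S.Φ s)) hs (hs.trans hst)
        simp only [innerSL_apply_apply] at this
        rw [← this, inner_sub_right]
      have i3 : (∫ r in s..t, inner ℝ (S.Φ s - S.Φ r) (S.L (S.u r) (S.Φ r)))
          = inner ℝ (S.Φ s) (S.Φ t - S.Φ s) + ∫ r in s..t, S.d (S.u r) * (S.y (S.Φ r))^2 := by
        rw [← i2, ← intervalIntegral.integral_add i1 (S.intd s t)]
        congr 1; funext r
        rw [inner_sub_left, S.hL]; ring
      have i4 := intervalIntegral.integral_interval_sub_left (S.intd 0 t) (S.intd 0 s)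
      have i5 : ‖S.Φ t‖^2 = ‖S.Φ s‖^2 + 2 * inner ℝ (S.Φ s) (S.Φ t - S.Φ s) + ‖S.Φ t - S.Φ s‖^2 := by
        rw [← norm_add_sq_real]; simp
      rw [i3, ← i4]; simp only [hg]; rw [i5]; ring
    have h2 : |∫ r in s..t, inner ℝ (S.Φ s - S.Φ r) (S.L (S.u r) (S.Φ r))| ≤ (S.KL * B * (t - s)) * (S.KL * B) * (t - s) := by
      rw [← Real.norm_eq_abs]
      refine (intervalIntegral.norm_integral_le_of_norm_le_const (C := (S.KL * B * (t - s)) * (S.KL * B)) fun r hr => ?_).trans ?_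
      · rw [Set.uIoc_of_le hst] at hr
        refine (norm_inner_le_norm _ _).trans ?_
        have h3 := S.diff_le (B := B) hs hr.1.le (fun x hx => hBr x ⟨hx.1, hx.2.trans hr.2⟩)
        rw [norm_sub_rev]
        refine mul_le_mul (h3.trans ?_) ?_ (norm_nonneg _) (mul_nonneg hKB (by linarith))
        · exact mul_le_mul_of_nonneg_left (by linarith [hr.2]) hKB
        · exact (S.L_le _ _).trans (mul_le_mul_of_nonneg_left (hBr r ⟨hr.1.le, hr.2⟩) S.KL_nonneg)
      · rw [abs_of_nonneg (sub_nonneg.2 hst)]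
    rw [e1]
    have h4 : ‖S.Φ t - S.Φ s‖^2 ≤ (S.KL * B * (t - s))^2 := pow_le_pow_left₀ (norm_nonneg _) h1 2
    rw [abs_le] at h2 ⊢
    constructor <;> nlinarith [h2.1, h2.2, sq_nonneg (‖S.Φ t - S.Φ s‖), sq_nonneg (S.KL * B * (t - s))]
  have hgc : Continuous g := by
    refine (S.hΦ.norm.pow 2).add (continuous_const.mul ?_)
    exact intervalIntegral.continuous_primitive (fun s t => S.intd s t) 0
  have := constant_of_has_deriv_right_zero (f := g) (a := 0) (b := T) hgc.continuousOn ?_ T ⟨hT, le_rfl⟩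
  · simpa [hg] using this
  · intro x hx
    have : HasFDerivWithinAt (fun t => g t - g x) (0 : ℝ →L[ℝ] ℝ) (Set.Ici x) x := by
      refine Asymptotics.IsBigO.hasFDerivWithinAt (n := 2) ?_ (Set.mem_Ici.2 le_rfl) (by norm_num)
      refine Asymptotics.IsBigO.of_bound (3 * (S.KL * B)^2) ?_
      have hT' : ∀ᶠ t in 𝓝[Set.Ici x] x, t < T := nhdsWithin_le_nhds (Iio_mem_nhds hx.2)
      filter_upwards [self_mem_nhdsWithin, hT'] with t ht htT
      have := bound x t hx.1 ht htT.le
      simpa using this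
    have h2 := this.hasDerivWithinAt
    simpa using h2.add_const (g x)

lemma energy {s t : ℝ} (hs : 0 ≤ s) (hst : s ≤ t) :
    ‖S.Φ t‖^2 + 2 * ∫ r in s..t, S.d (S.u r) * (S.y (S.Φ r))^2 = ‖S.Φ s‖^2 := by
  have h1 := S.energy0 hs
  have h2 := S.energy0 (hs.trans hst)
  have i4 := intervalIntegral.integral_interval_sub_left (S.intd 0 t) (S.intd 0 s)
  linarith

lemma antitone {s t : ℝ} (hs : 0 ≤ s) (hst : s ≤ t) : ‖S.Φ t‖^2 ≤ ‖S.Φ s‖^2 := by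
  have := S.energy hs hst
  have h : 0 ≤ ∫ r in s..t, S.d (S.u r) * (S.y (S.Φ r))^2 :=
    intervalIntegral.integral_nonneg hst fun r _ =>
      mul_nonneg (S.hδ.le.trans (S.hdδ _)) (sq_nonneg _)
  linarith

lemma bdd {t : ℝ} (ht : 0 ≤ t) : ‖S.Φ t‖ ≤ ‖S.Φ 0‖ :=
  (pow_le_pow_iff_left₀ (norm_nonneg _) (norm_nonneg _) two_ne_zero).1 (S.antitone le_rfl ht)

lemma lip {s t : ℝ} (hs : 0 ≤ s) (hst : s ≤ t) :
    ‖S.Φ t - S.Φ s‖ ≤ S.KL * ‖S.Φ 0‖ * (t - s) :=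
  S.diff_le hs hst fun _ hr => S.bdd (hs.trans hr.1)

lemma lim : ∃ V, Tendsto (fun t => ‖S.Φ t‖^2) atTop (𝓝 V) := by
  have h1 : Antitone (fun t => ‖S.Φ (max t 0)‖^2) := fun s t hst =>
    S.antitone (le_max_right _ _) (max_le_max_right 0 hst)
  have h2 := tendsto_atTop_ciInf h1 ⟨0, by rintro _ ⟨t, rfl⟩; positivity⟩
  refine ⟨_, h2.congr' ?_⟩
  filter_upwards [eventually_ge_atTop 0] with t ht
  rw [max_eq_left ht]

/-- uniform Lipschitz bound for functionals -/
lemma lipl (l : E →L[ℝ] ℝ) : ∃ K > 0, ∀ s t, 0 ≤ s → s ≤ t → |l (S.Φ t) - l (S.Φ s)| ≤ K * (t - s) := by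
  refine ⟨‖l‖ * (S.KL * ‖S.Φ 0‖) + 1, ?_, fun s t hs hst => ?_⟩
  · have := S.KL_nonneg; positivity
  · rw [← map_sub, ← Real.norm_eq_abs]
    refine (l.le_opNorm _).trans ((mul_le_mul_of_nonneg_left (S.lip hs hst) (norm_nonneg _)).trans ?_)
    nlinarith

lemma y_tendsto : Tendsto (fun t => S.y (S.Φ t)) atTop (𝓝 0) := by
  obtain ⟨V, hV⟩ := S.lim
  obtain ⟨K, hK, hl⟩ := S.lipl S.y
  rw [Metric.tendsto_atTop]
  intro ε hε
  set h := ε / (2 * K) with hh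
  have hh0 : 0 < h := by positivity
  have hdif : Tendsto (fun t => ‖S.Φ t‖^2 - ‖S.Φ (t + h)‖^2) atTop (𝓝 0) := by
    simpa using hV.sub (hV.comp (tendsto_atTop_add_const_right atTop h tendsto_id))
  have hpos : 0 < 2 * (h * (S.δ * (ε/2)^2)) := by have := S.hδ; positivity
  have hev := hdif.eventually (gt_mem_nhds hpos)
  obtain ⟨N, hN⟩ := eventually_atTop.1 hev
  refine ⟨max N 0, fun t ht => ?_⟩
  have ht0 : 0 ≤ t := (le_max_right _ _).trans ht
  have h1 := hN t ((le_max_left _ _).trans ht)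
  by_contra! hc
  rw [Real.dist_0_eq_abs] at hc
  have he := S.energy (s := t) (t := t + h) ht0 (by linarith)
  have : h * (S.δ * (ε/2)^2) ≤ ∫ r in t..(t+h), S.d (S.u r) * (S.y (S.Φ r))^2 := by
    have h3 := intervalIntegral.integral_mono_on (a := t) (b := t + h) (μ := volume)
      (f := fun _ => S.δ * (ε/2)^2) (by linarith) (by simp) (S.intd t (t+h)) (fun r hr => by
        have hr2 := hl t r ht0 hr.1
        have : K * (r - t) ≤ ε / 2 := by
          have : K * (r - t) ≤ K * h := mul_le_mul_of_nonneg_left (by linarith [hr.2]) hK.le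
          have e : K * h = ε / 2 := by rw [hh]; field_simp
          linarith
        have h5 : ε / 2 ≤ |S.y (S.Φ r)| := by
          have := abs_sub_abs_le_abs_sub (S.y (S.Φ t)) (S.y (S.Φ r))
          rw [abs_sub_comm] at this
          linarith
        have h6 : (ε/2)^2 ≤ (S.y (S.Φ r))^2 := by
          rw [← sq_abs (S.y (S.Φ r))]; exact pow_le_pow_left₀ (by positivity) h5 2
        exact mul_le_mul (S.hdδ _) h6 (by positivity) (S.hδ.le.trans (S.hdδ _)))
    rw [intervalIntegral.integral_const] at h3
    simpa only [add_sub_cancel_left, smul_eq_mul] using h3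
  linarith

lemma prop_bound (j : Fin q) {t τ ε : ℝ} (ht : 0 ≤ t) (hτ : 0 ≤ τ) 
    (hε : ∀ r, t ≤ r → |S.y (S.Φ r)| ≤ ε) :
    ‖S.Z j (S.Φ (t + τ)) - EE (a j) τ * S.Z j (S.Φ t)‖ ≤ ε * (|a j| * τ * τ + τ) := by
  have hε0 : 0 ≤ ε := (abs_nonneg _).trans (hε t le_rfl)
  have hcont : Continuous (fun r => Complex.I * a j * S.Z j (S.Φ r)) :=
    continuous_const.mul ((S.Z j).continuous.comp S.hΦ)
  set J : ℝ → ℂ := fun s => ∫ r in t..(t+s), Complex.I * a j * S.Z j (S.Φ r) with hJ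
  set P : ℝ → ℂ := fun s => ∫ r in t..(t+s), (S.y (S.Φ r) : ℂ) * S.c (S.u r) with hP
  have hJd : ∀ s, HasDerivAt J (Complex.I * a j * S.Z j (S.Φ (t + s))) s := by
    intro s
    have := (hcont.integral_hasStrictDerivAt t (t+s)).hasDerivAt
    exact this.comp_const_add t s
  have hZJ : ∀ s, 0 ≤ s → S.Z j (S.Φ (t+s)) - S.Z j (S.Φ t) = J s - P s := by
    intro s hs
    rw [S.diffl (S.Z j) ht (by linarith)]
    simp only [hJ, hP]
    rw [← intervalIntegral.integral_sub (hcont.intervalIntegrable _ _)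
      (S.intg (fun k r => (S.y (S.Φ r) : ℂ) * S.c k) (fun k => 
        (Complex.continuous_ofReal.comp (S.y.continuous.comp S.hΦ)).mul continuous_const) _ _)]
    congr 1; funext r; rw [S.hZ]
  have hPb : ∀ s, 0 ≤ s → ‖P s‖ ≤ ε * s := by
    intro s hs
    refine (intervalIntegral.norm_integral_le_of_norm_le_const (C := ε) fun r hr => ?_).trans ?_
    · rw [Set.uIoc_of_le (by linarith)] at hr
      rw [norm_mul, Complex.norm_real, Real.norm_eq_abs]
      have := mul_le_mul (hε r hr.1.le) (S.hc (S.u r)) (norm_nonneg _) hε0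
      linarith
    · simp [abs_of_nonneg hs]
  set H : ℝ → ℂ := fun s => EE (-a j) s * (S.Z j (S.Φ t) + J s) with hH
  have hHd : ∀ s, 0 ≤ s → HasDerivAt H (EE (-a j) s * (Complex.I * a j) * (- P s)) s := by
    intro s hs
    refine ((EE_deriv (-a j) s).mul ((hJd s).const_add _)).congr_deriv ?_
    have := hZJ s hs
    have e : S.Z j (S.Φ (t+s)) = S.Z j (S.Φ t) + J s - P s := by linear_combination this
    rw [e]; push_cast; ring
  have hfin := norm_image_sub_le_of_norm_deriv_le_segment' (f := H) (a := 0) (b := τ)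
    (C := |a j| * (ε * τ)) (fun s hs => (hHd s hs.1).hasDerivWithinAt) (fun s hs => by
      rw [norm_mul, norm_mul, norm_mul, EE_norm, norm_neg, Complex.norm_I, Complex.norm_real, Real.norm_eq_abs]
      simp only [one_mul]
      refine mul_le_mul_of_nonneg_left ((hPb s hs.1).trans ?_) (abs_nonneg _)
      exact mul_le_mul_of_nonneg_left hs.2.le hε0) τ ⟨hτ, le_rfl⟩
  have hEE : EE (a j) τ * EE (-a j) τ = 1 := by rw [← EE_add]; simp [EE]
  have hH0 : H 0 = S.Z j (S.Φ t) := by simp [hH, hJ, EE]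
  have e : S.Z j (S.Φ (t + τ)) - EE (a j) τ * S.Z j (S.Φ t) = EE (a j) τ * (H τ - H 0) - P τ := by
    rw [hH0]; simp only [hH]
    linear_combination hZJ τ hτ - (S.Z j (S.Φ t) + J τ) * hEE
  rw [e]
  refine (norm_sub_le _ _).trans ?_
  rw [norm_mul, EE_norm]
  have := hPb τ hτ
  nlinarith

lemma prop_tendsto (j : Fin q) {τ : ℝ} (hτ : 0 ≤ τ) :
    Tendsto (fun t => S.Z j (S.Φ (t + τ)) - EE (a j) τ * S.Z j (S.Φ t)) atTop (𝓝 0) := by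
  rw [Metric.tendsto_atTop]
  intro ε hε
  set M := |a j| * τ * τ + τ + 1 with hM
  have hM0 : 0 < M := by positivity
  obtain ⟨N, hN⟩ := Metric.tendsto_atTop.1 S.y_tendsto (ε / M) (by positivity)
  refine ⟨max N 0, fun t ht => ?_⟩
  have := S.prop_bound j (t := t) (ε := ε / M) ((le_max_right _ _).trans ht) hτ (fun r hr => by
    have := hN r (((le_max_left _ _).trans ht).trans hr)
    rw [Real.dist_0_eq_abs] at this; exact this.le)
  rw [dist_zero_right]
  refine this.trans_lt ?_
  have e : ε = ε / M * M := by field_simp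
  have : 0 < ε / M := by positivity
  calc ε / M * (|a j| * τ * τ + τ) < ε / M * M := mul_lt_mul_of_pos_left (by rw [hM]; linarith) this
    _ = ε := e.symm

lemma no_push (T : ℕ → ℝ) (hT : Tendsto T atTop atTop) (w m : ℝ) (hm : 0 < m)
    (h : ∀ k, ∀ᶠ n in atTop, m ≤ w * S.C k (S.Φ (T n))) : False := by
  obtain ⟨K0, hK0, hl0⟩ := S.lipl (w • S.C 0)
  obtain ⟨K1, hK1, hl1⟩ := S.lipl (w • S.C 1)
  set h' := m / (2 * (K0 + K1)) with hh
  have hh0 : 0 < h' := by positivity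
  have hKh : (K0 + K1) * h' = m / 2 := by rw [hh]; field_simp
  have hD : 0 < S.D := S.hδ.trans_le ((S.hdδ 0).trans (S.hdD 0))
  set wy : ℝ → ℝ := fun t => w * S.y (S.Φ t) with hwy
  have hwyt : Tendsto wy atTop (𝓝 0) := by simpa using S.y_tendsto.const_mul w
  set η := min (m / (4 * S.D)) (h' * m / 16) with hη
  have hη0 : 0 < η := by positivity
  obtain ⟨N, hN⟩ := Metric.tendsto_atTop.1 hwyt η hη0
  obtain ⟨n, ⟨hn0, hn1⟩, hnN⟩ := (((h 0).and (h 1)).and (hT.eventually_ge_atTop (max N 0))).exists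
  have hT0 : 0 ≤ T n := (le_max_right _ _).trans hnN
  have hy : ∀ r, T n ≤ r → |wy r| ≤ η := fun r hr => by
    have := hN r (((le_max_left _ _).trans hnN).trans hr)
    rw [Real.dist_0_eq_abs] at this; exact this.le
  have hd := S.diffl (w • S.y) hT0 (t := T n + h') (by linarith)
  have hlow : h' * (m / 4) ≤ ∫ r in (T n)..(T n + h'), (w • S.y) (S.L (S.u r) (S.Φ r)) := by
    have h3 := intervalIntegral.integral_mono_on (a := T n) (b := T n + h') (μ := volume)
      (f := fun _ => m / 4) (g := fun r => (w • S.y) (S.L (S.u r) (S.Φ r))) (by linarith) (by simp)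
      (S.intg (fun k r => (w • S.y) (S.L k (S.Φ r)))
        (fun k => (w • S.y).continuous.comp ((S.L k).continuous.comp S.hΦ)) _ _) (fun r hr => by
        have hrl : r - T n ≤ h' := by linarith [hr.2]
        have hr0 : 0 ≤ r - T n := by linarith [hr.1]
        have hCk : ∀ k, m / 2 ≤ w * S.C k (S.Φ r) := by
          intro k
          have a0 := (abs_le.1 (hl0 (T n) r hT0 hr.1)).1
          have a1 := (abs_le.1 (hl1 (T n) r hT0 hr.1)).1
          simp only [_root_.smul_apply, smul_eq_mul] at a0 a1
          have : k = 0 ∨ k = 1 := by omega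
          rcases this with rfl | rfl <;> nlinarith
        have h5 := hCk (S.u r)
        have h6 := hy r hr.1
        have h7 : S.d (S.u r) * |wy r| ≤ m / 4 := by
          calc S.d (S.u r) * |wy r| ≤ S.D * (m / (4 * S.D)) :=
                mul_le_mul (S.hdD _) (h6.trans (min_le_left _ _)) (abs_nonneg _) hD.le
            _ = m / 4 := by field_simp
        have h8 : S.d (S.u r) * wy r ≤ S.d (S.u r) * |wy r| :=
          mul_le_mul_of_nonneg_left (le_abs_self _) (S.hδ.le.trans (S.hdδ _))
        simp only [_root_.smul_apply, smul_eq_mul, S.hy]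
        simp only [hwy] at h7 h8
        nlinarith)
    rw [intervalIntegral.integral_const] at h3
    simpa only [add_sub_cancel_left, smul_eq_mul] using h3
  rw [← hd] at hlow
  simp only [_root_.smul_apply, smul_eq_mul] at hlow
  have h1 := (abs_le.1 (hy (T n) le_rfl)).1
  have h2 := (abs_le.1 (hy (T n + h') (by linarith))).2
  have h3 : η ≤ h' * m / 16 := min_le_right _ _
  simp only [hwy] at h1 h2
  have : 0 < h' * m := by positivity
  linarith

lemma main (ha : LinearIndependent ℚ a) : Tendsto S.Φ atTop (𝓝 0) := by
  obtain ⟨V, hV⟩ := S.lim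
  obtain ⟨x, -, φ, hφ, hx⟩ := (isCompact_closedBall (0:E) ‖S.Φ 0‖).tendsto_subseq
    (x := fun n : ℕ => S.Φ n) (fun n => by simpa using S.bdd (Nat.cast_nonneg n))
  have hφt : Tendsto (fun n => (φ n : ℝ)) atTop atTop :=
    tendsto_natCast_atTop_atTop.comp hφ.tendsto_atTop
  have hx' : Tendsto (fun n => S.Φ (φ n)) atTop (𝓝 x) := hx
  have hVx : V = ‖x‖^2 := tendsto_nhds_unique (hV.comp hφt) (hx'.norm.pow 2)
  have hyx : S.y x = 0 :=
    tendsto_nhds_unique ((S.y.continuous.tendsto x).comp hx') (S.y_tendsto.comp hφt)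
  have hx0 : x = 0 := by
    by_contra hne
    have hz : (fun j => S.Z j x) ≠ 0 := fun h => hne (S.hinj x hyx fun j => congrFun h j)
    obtain ⟨τ, hτ, hpos⟩ := key ha _ hz
    set s := ∑ j, EE (a j) τ * S.Z j x with hs
    have hconv : Tendsto (fun n => ∑ j, S.Z j (S.Φ (φ n + τ))) atTop (𝓝 s) := by
      refine tendsto_finsetSum _ fun j _ => ?_
      have h1 := (S.prop_tendsto j hτ).comp hφt
      have h2 := (((S.Z j).continuous.tendsto x).comp hx').const_mul (EE (a j) τ)
      have h3 := h1.add h2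
      simpa using h3
    have hre := (Complex.continuous_re.tendsto s).comp hconv
    have him := (Complex.continuous_im.tendsto s).comp hconv
    have p0 : 0 < s.re * s.re := by
      have : s.re ≠ 0 := fun h => by rw [h] at hpos; simp at hpos
      exact mul_self_pos.2 this
    have hmin : 0 < min (s.re * s.re) (s.re * s.im) := lt_min p0 hpos
    refine S.no_push (fun n => φ n + τ) (tendsto_atTop_add_const_right _ _ hφt) s.re
      (min (s.re * s.re) (s.re * s.im) / 2) (by positivity) ?_
    intro k
    have : k = 0 ∨ k = 1 := by omega
    rcases this with rfl | rfl
    · have := (hre.const_mul s.re).eventually (lt_mem_nhds (a := min (s.re * s.re) (s.re * s.im) / 2)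
        (by linarith [min_le_left (s.re * s.re) (s.re * s.im)]))
      filter_upwards [this] with n hn
      rw [S.hC0]; exact hn.le
    · have := (him.const_mul s.re).eventually (lt_mem_nhds (a := min (s.re * s.re) (s.re * s.im) / 2)
        (by linarith [min_le_right (s.re * s.re) (s.re * s.im)]))
      filter_upwards [this] with n hn
      rw [S.hC1]; exact hn.le
  rw [hx0] at hVx
  simp only [norm_zero, ne_eq, OfNat.ofNat_ne_zero, not_false_eq_true, zero_pow] at hVx
  rw [hVx] at hV
  rw [tendsto_zero_iff_norm_tendsto_zero]
  have := hV.sqrt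
  simpa using this

end SwData

lemma cplx (x y : ℝ) : (⟨x, y⟩ : ℂ) = x + y * Complex.I := Complex.mk_eq_add_mul_I x y

/-- coordinates as a complex functional -/
def Zfun {q : ℕ} (j : Fin q) : EuclideanSpace ℝ ((Fin q × Fin 2) ⊕ Fin 1) →L[ℝ] ℂ :=
  Complex.ofRealCLM.comp (EuclideanSpace.proj (Sum.inl (j, 0))) +
    Complex.I • Complex.ofRealCLM.comp (EuclideanSpace.proj (Sum.inl (j, 1)))

lemma Zfun_apply {q : ℕ} (j : Fin q) (x : EuclideanSpace ℝ ((Fin q × Fin 2) ⊕ Fin 1)) :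
    Zfun j x = (x (Sum.inl (j, 0)) : ℂ) + Complex.I * (x (Sum.inl (j, 1)) : ℂ) := by
  simp [Zfun]

def Cfun {q : ℕ} (k : Fin 2) : EuclideanSpace ℝ ((Fin q × Fin 2) ⊕ Fin 1) →L[ℝ] ℝ :=
  ∑ j, EuclideanSpace.proj (Sum.inl (j, k))

lemma Cfun_apply {q : ℕ} (k : Fin 2) (x : EuclideanSpace ℝ ((Fin q × Fin 2) ⊕ Fin 1)) :
    Cfun k x = ∑ j, x (Sum.inl (j, k)) := by
  simp [Cfun]

def rowC {q : ℕ} (k : Fin 2) : Matrix (Fin 1) (Fin q × Fin 2) ℝ := ![rowC₀, rowC₁] k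

lemma rowC_apply {q : ℕ} (k : Fin 2) (i : Fin 1) (p : Fin q × Fin 2) :
    rowC k i p = if p.2 = k then 1 else 0 := by
  fin_cases k <;> simp [rowC, rowC₀, rowC₁]

def Bmat {q : ℕ} (a : Fin q → ℝ) (d : Fin 2 → ℝ) (k : Fin 2) :
    Matrix ((Fin q × Fin 2) ⊕ Fin 1) ((Fin q × Fin 2) ⊕ Fin 1) ℝ :=
  Matrix.fromBlocks (blockDiagRot a) (-(rowC k)ᵀ) (rowC k) (Matrix.of fun _ _ => - d k)

lemma Bmat_inr {q : ℕ} (a : Fin q → ℝ) (d : Fin 2 → ℝ) (k : Fin 2)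
    (x : EuclideanSpace ℝ ((Fin q × Fin 2) ⊕ Fin 1)) :
    Matrix.toEuclideanLin (Bmat a d k) x (Sum.inr 0)
      = ∑ j, x (Sum.inl (j, k)) - d k * x (Sum.inr 0) := by
  simp [Matrix.toLpLin_apply, Matrix.mulVec, dotProduct, Bmat, rowC_apply,
    Fintype.sum_prod_type, sub_eq_add_neg]

lemma Bmat_inl0 {q : ℕ} (a : Fin q → ℝ) (d : Fin 2 → ℝ) (k : Fin 2) (j : Fin q)
    (x : EuclideanSpace ℝ ((Fin q × Fin 2) ⊕ Fin 1)) :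
    Matrix.toEuclideanLin (Bmat a d k) x (Sum.inl (j, 0))
      = - a j * x (Sum.inl (j, 1)) - (if k = 0 then 1 else 0) * x (Sum.inr 0) := by
  simp [Matrix.toLpLin_apply, Matrix.mulVec, dotProduct, Bmat, rowC_apply, blockDiagRot,
    Fintype.sum_prod_type, sub_eq_add_neg, ite_mul, Finset.sum_add_distrib, eq_comm]

lemma Bmat_inl1 {q : ℕ} (a : Fin q → ℝ) (d : Fin 2 → ℝ) (k : Fin 2) (j : Fin q)
    (x : EuclideanSpace ℝ ((Fin q × Fin 2) ⊕ Fin 1)) :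
    Matrix.toEuclideanLin (Bmat a d k) x (Sum.inl (j, 1))
      = a j * x (Sum.inl (j, 0)) - (if k = 1 then 1 else 0) * x (Sum.inr 0) := by
  simp [Matrix.toLpLin_apply, Matrix.mulVec, dotProduct, Bmat, rowC_apply, blockDiagRot,
    Fintype.sum_prod_type, sub_eq_add_neg, ite_mul, Finset.sum_add_distrib, eq_comm]

lemma Bmat_inner {q : ℕ} (a : Fin q → ℝ) (d : Fin 2 → ℝ) (k : Fin 2)
    (x : EuclideanSpace ℝ ((Fin q × Fin 2) ⊕ Fin 1)) :
    inner ℝ x (Matrix.toEuclideanLin (Bmat a d k) x) = - d k * (x (Sum.inr 0))^2 := by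
  rw [PiLp.inner_apply, Fintype.sum_sum_type, Fintype.sum_prod_type]
  simp only [Fin.sum_univ_two, Fin.sum_univ_one, Bmat_inr, Bmat_inl0, Bmat_inl1,
    RCLike.inner_apply, conj_trivial]
  rw [sub_mul, Finset.sum_mul]
  have : ∀ j, (- a j * x (Sum.inl (j, 1)) - (if k = 0 then 1 else 0) * x (Sum.inr 0)) * x (Sum.inl (j, 0))
      + (a j * x (Sum.inl (j, 0)) - (if k = 1 then 1 else 0) * x (Sum.inr 0)) * x (Sum.inl (j, 1))
      = - (x (Sum.inl (j, k)) * x (Sum.inr 0)) := by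
    intro j
    have : k = 0 ∨ k = 1 := by omega
    rcases this with rfl | rfl <;> simp <;> ring
  rw [Finset.sum_congr rfl fun j _ => this j, Finset.sum_neg_distrib]
  ring

end Helpers

/-- If `q ≥ 1`, `a₁, …, a_q` are rationally independent and
`d₀, d₁ > 0`, then the switched system defined by the `(2q+1)×(2q+1)` block matrices
`B₀ = [[A, -C₀ᵀ],[C₀, -d₀]]` and `B₁ = [[A, -C₁ᵀ],[C₁, -d₁]]` is GUAS. -/
theorem isGUAS_torus_example {q : ℕ} (hq : 1 ≤ q) (a : Fin q → ℝ)
    (ha : LinearIndependent ℚ a) (d₀ d₁ : ℝ) (hd₀ : 0 < d₀) (hd₁ : 0 < d₁) :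
    IsGUAS
      (Matrix.fromBlocks (blockDiagRot a) (-rowC₀ᵀ) rowC₀ (Matrix.of fun _ _ => -d₀))
      (Matrix.fromBlocks (blockDiagRot a) (-rowC₁ᵀ) rowC₁ (Matrix.of fun _ _ => -d₁)) := by
  intro u hu X Φ hΦ heq
  let d : Fin 2 → ℝ := ![d₀, d₁]
  have hB : ∀ k, ![Matrix.fromBlocks (blockDiagRot a) (-rowC₀ᵀ) rowC₀ (Matrix.of fun _ _ => -d₀),
      Matrix.fromBlocks (blockDiagRot a) (-rowC₁ᵀ) rowC₁ (Matrix.of fun _ _ => -d₁)] k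
      = Bmat a d k := by
    intro k
    fin_cases k <;> rfl
  let S : SwData a (EuclideanSpace ℝ ((Fin q × Fin 2) ⊕ Fin 1)) :=
    { L := fun k => LinearMap.toContinuousLinearMap (Matrix.toEuclideanLin (Bmat a d k))
      y := EuclideanSpace.proj (Sum.inr 0)
      C := Cfun
      d := d
      Z := Zfun
      c := ![1, Complex.I]
      δ := min d₀ d₁
      D := max d₀ d₁
      hδ := lt_min hd₀ hd₁
      hdδ := by intro k; fin_cases k <;> simp [d]
      hdD := by intro k; fin_cases k <;> simp [d]
      hc := by intro k; fin_cases k <;> simp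
      hL := fun k x => Bmat_inner a d k x
      hy := fun k x => by
        rw [Cfun_apply]; exact Bmat_inr a d k x
      hZ := fun j k x => by
        simp only [LinearMap.coe_toContinuousLinearMap', Zfun_apply, Bmat_inl0, Bmat_inl1,
          PiLp.proj_apply]
        have hI := Complex.I_mul_I
        have : k = 0 ∨ k = 1 := by omega
        rcases this with rfl | rfl
        · simp; linear_combination (-(a j : ℂ) * x (Sum.inl (j, 1))) * hI
        · simp; linear_combination (-(a j : ℂ) * x (Sum.inl (j, 1))) * hI
      hC0 := fun x => by simp [Cfun_apply, Zfun_apply]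
      hC1 := fun x => by simp [Cfun_apply, Zfun_apply]
      hinj := fun x hy hz => by
        ext i
        rcases i with ⟨j, k⟩ | i
        · have h := hz j
          rw [Zfun_apply, Complex.ext_iff] at h
          have : k = 0 ∨ k = 1 := by omega
          rcases this with rfl | rfl
          · simpa using h.1
          · simpa using h.2
        · rw [Subsingleton.elim i 0]; exact hy
      u := u
      hu := hu
      Φ := Φ
      hΦ := hΦ
      X := X
      heq := fun t ht => by
        rw [heq t ht]
        simp only [hB]
        rfl }
  exact S.main ha

end
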